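/- Let $A_0,A_1,A_2,A_3\in\mathbb{C}$ be algebraically independent over $\mathbb{Q}$, and write $A_{\varepsilon_0\varepsilon_1\varepsilon_2\varepsilon_3}:=(\varepsilon_0A_0+\varepsilon_1A_1+\varepsilon_2A_2+\varepsilon_3A_3+1)/2$ for signs $\varepsilon_j\in\{+,-\}$. Put $$H_0(n;A):=\frac{-\{4(n-A_0)^2-1\}\{(2n^2-4A_0n+A_0^2+A_1^2-A_2^2-A_3^2+1)^2-4(n-A_0)^2\}}{4n(n-2A_0)(n-A_0-A_2)(n-A_0+A_2)(n-A_0-A_3)(n-A_0+A_3)}.$$ For a tuple $\alpha=(\alpha_0,\alpha_1,\alpha_2,\alpha_3;\beta_1,\beta_2,\beta_3)$ of complex numbers put $$U_1(\alpha)=\frac{-(\beta_1-\alpha_1)(\beta_1+\beta_2-\alpha_2-\alpha_3)}{\beta_1(\beta_3-\alpha_0-1)},\qquad V_1(\alpha)=\frac{-\alpha_1(\beta_2-\alpha_2)(\beta_2-\alpha_3)}{\beta_1\beta_2(\beta_3-\alpha_0-1)},$$ $$U_2(\alpha)=\frac{-(\beta_2-\alpha_0)(\beta_1+\beta_2-\alpha_2-\alpha_3)}{\beta_2(\beta_3-\alpha_1-1)},\qquad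 V_2(\alpha)=\frac{-\alpha_0(\beta_1-\alpha_2)(\beta_1-\alpha_3)}{\beta_1\beta_2(\beta_3-\alpha_1-1)},$$ $$q_1(\alpha)=U_1(\alpha)U_2(\alpha+e_1)+V_1(\alpha)+\frac{U_1(\alpha)V_2(\alpha+e_1)}{U_1(\alpha+e_{12})},\qquad q_2(\alpha)=\frac{-U_1(\alpha)V_1(\alpha+e_{12})V_2(\alpha+e_1)}{U_1(\alpha+e_{12})},$$ where adding $e_1$ adds $1$ to $\alpha_0,\beta_1$ and adding $e_{12}$ adds $1$ to $\alpha_0,\alpha_1,\beta_1,\beta_2$. For $\hat\alpha=(0,\alpha_1,\alpha_2,\alpha_3;\beta_1,\beta_2,\beta_3)$ let $(n;\hat\alpha):=(-n,\alpha_1-n,\alpha_2,\alpha_3;\beta_1-n,\beta_2-n,\beta_3)$ and $$H^{(0)}(n;\hat\alpha):=\frac{q_1(n;\hat\alpha)\,q_1(n+1;\hat\alpha)}{q_2(n+1;\hat\alpha)}.$$ Either expression is called defined at $n$ if none of the denominators occurring in these formulas vanishes. Let $\hat\alpha=(0,\alpha_1,\alpha_2,\alpha_3;\beta_1,\beta_2,\beta_3)$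 be a tuple of complex numbers satisfying the balanced condition $\beta_1+\beta_2+\beta_3-\alpha_1-\alpha_2-\alpha_3=1$. Then $H_0(\cdot\,;A)$ and $H^{(0)}(\cdot\,;\hat\alpha)$ agree as functions of $n$ (that is, both are defined for all but finitely many integers $n\ge1$, and $H_0(n;A)=H^{(0)}(n;\hat\alpha)$ for all integers $n\ge1$ at which both are defined) if and only if $\hat\alpha$ is obtained from $$(0,\,A_0,\,A_{-+-+},\,A_{-++-};\ A_{++--},\,A_{++++},\,1-A_0)$$ or from $$(0,\,A_0-A_2,\,A_{-+-+},\,A_{-+--};\ A_{++--},\,A_{++-+},\,1-A_0-A_2)$$ by applying some combination of the substitutions $A_j\to-A_j$ ($j\in\{1,2,3\}$), the exchange $A_2\leftrightarrow A_3$, and the swaps $\alpha_2\leftrightarrow\alpha_3$ and $\beta_1\leftrightarrow\beta_2$. -/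

import Mathlib

namespace Stmt14

/-- A parameter tuple `(α₀, α₁, α₂, α₃; β₁, β₂, β₃)` for `₄F₃`. -/
structure HGParam where
  a0 : ℂ
  a1 : ℂ
  a2 : ℂ
  a3 : ℂ
  b1 : ℂ
  b2 : ℂ
  b3 : ℂ

/-- The shift `e₁`: add `1` to `α₀` and `β₁`. -/
def e1 (p : HGParam) : HGParam := ⟨p.a0 + 1, p.a1, p.a2, p.a3, p.b1 + 1, p.b2, p.b3⟩

/-- The shift `e₁₂`: add `1` to each of `α₀, α₁, β₁, β₂`. -/
def e12 (p : HGParam) : HGParam := ⟨p.a0 + 1, p.a1 + 1, p.a2, p.a3, p.b1 + 1, p.b2 + 1, p.b3⟩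

noncomputable def U1 (p : HGParam) : ℂ :=
  -((p.b1 - p.a1) * (p.b1 + p.b2 - p.a2 - p.a3)) / (p.b1 * (p.b3 - p.a0 - 1))

noncomputable def V1 (p : HGParam) : ℂ :=
  -(p.a1 * (p.b2 - p.a2) * (p.b2 - p.a3)) / (p.b1 * p.b2 * (p.b3 - p.a0 - 1))

noncomputable def U2 (p : HGParam) : ℂ :=
  -((p.b2 - p.a0) * (p.b1 + p.b2 - p.a2 - p.a3)) / (p.b2 * (p.b3 - p.a1 - 1))

noncomputable def V2 (p : HGParam) : ℂ :=
  -(p.a0 * (p.b1 - p.a2) * (p.b1 - p.a3)) / (p.b1 * p.b2 * (p.b3 - p.a1 - 1))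

noncomputable def q1 (p : HGParam) : ℂ :=
  U1 p * U2 (e1 p) + V1 p + U1 p * V2 (e1 p) / U1 (e12 p)

noncomputable def q2 (p : HGParam) : ℂ :=
  -(U1 p * V1 (e12 p) * V2 (e1 p)) / U1 (e12 p)

/-- `(n; α̂) = −n·e₁₂ + α̂`. -/
noncomputable def shiftn (p : HGParam) (n : ℕ) : HGParam :=
  ⟨p.a0 - (n : ℂ), p.a1 - (n : ℂ), p.a2, p.a3, p.b1 - (n : ℂ), p.b2 - (n : ℂ), p.b3⟩

/-- The invariant `H⁽⁰⁾(n; α̂) = q₁⁽⁰⁾(n;α̂)q₁⁽⁰⁾(n+1;α̂)/q₂⁽⁰⁾(n+1;α̂)`. -/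
noncomputable def HF (p : HGParam) (n : ℕ) : ℂ :=
  q1 (shiftn p n) * q1 (shiftn p (n + 1)) / q2 (shiftn p (n + 1))

/-- The invariant `H₀(n; A)` of the recurrence `Rc₀(A)`. -/
noncomputable def H0 (A₀ A₁ A₂ A₃ : ℂ) (n : ℕ) : ℂ :=
  -((4 * ((n : ℂ) - A₀) ^ 2 - 1)
      * ((2 * (n : ℂ) ^ 2 - 4 * A₀ * (n : ℂ) + A₀ ^ 2 + A₁ ^ 2 - A₂ ^ 2 - A₃ ^ 2 + 1) ^ 2
          - 4 * ((n : ℂ) - A₀) ^ 2))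
    / (4 * (n : ℂ) * ((n : ℂ) - 2 * A₀) * ((n : ℂ) - A₀ - A₂) * ((n : ℂ) - A₀ + A₂)
        * ((n : ℂ) - A₀ - A₃) * ((n : ℂ) - A₀ + A₃))

/-- Every denominator occurring in the formula for `q₁⁽⁰⁾` at `p` is nonzero. -/
def Q1Def (p : HGParam) : Prop :=
  p.b1 ≠ 0 ∧ p.b2 ≠ 0 ∧ p.b1 + 1 ≠ 0 ∧ p.b3 - p.a0 - 1 ≠ 0 ∧ p.b3 - p.a0 - 2 ≠ 0 ∧
    p.b3 - p.a1 - 1 ≠ 0 ∧ U1 (e12 p) ≠ 0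

/-- Every denominator occurring in the formula for `q₂⁽⁰⁾` at `p` is nonzero. -/
def Q2Def (p : HGParam) : Prop :=
  p.b1 ≠ 0 ∧ p.b2 ≠ 0 ∧ p.b1 + 1 ≠ 0 ∧ p.b2 + 1 ≠ 0 ∧ p.b3 - p.a0 - 1 ≠ 0 ∧
    p.b3 - p.a0 - 2 ≠ 0 ∧ p.b3 - p.a1 - 1 ≠ 0 ∧ U1 (e12 p) ≠ 0

/-- `H₀(n; A)` is defined (its denominator is nonzero). -/
def H0Def (A₀ A₁ A₂ A₃ : ℂ) (n : ℕ) : Prop :=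
  4 * (n : ℂ) * ((n : ℂ) - 2 * A₀) * ((n : ℂ) - A₀ - A₂) * ((n : ℂ) - A₀ + A₂)
    * ((n : ℂ) - A₀ - A₃) * ((n : ℂ) - A₀ + A₃) ≠ 0

/-- `H⁽⁰⁾(n; α̂)` is defined (all denominators are nonzero). -/
def HFDef (p : HGParam) (n : ℕ) : Prop :=
  Q1Def (shiftn p n) ∧ Q1Def (shiftn p (n + 1)) ∧ Q2Def (shiftn p (n + 1)) ∧
    q2 (shiftn p (n + 1)) ≠ 0

/-- The tuple `(0, B₀, B₋₊₋₊, B₋₊₊₋; B₊₊₋₋, B₊₊₊₊, 1−B₀)`. -/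
noncomputable def T1 (B₀ B₁ B₂ B₃ : ℂ) : HGParam :=
  ⟨0, B₀, (-B₀ + B₁ - B₂ + B₃ + 1) / 2, (-B₀ + B₁ + B₂ - B₃ + 1) / 2,
    (B₀ + B₁ - B₂ - B₃ + 1) / 2, (B₀ + B₁ + B₂ + B₃ + 1) / 2, 1 - B₀⟩

/-- The tuple `(0, B₀−B₂, B₋₊₋₊, B₋₊₋₋; B₊₊₋₋, B₊₊₋₊, 1−B₀−B₂)`. -/
noncomputable def T2 (B₀ B₁ B₂ B₃ : ℂ) : HGParam :=
  ⟨0, B₀ - B₂, (-B₀ + B₁ - B₂ + B₃ + 1) / 2, (-B₀ + B₁ - B₂ - B₃ + 1) / 2,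
    (B₀ + B₁ - B₂ - B₃ + 1) / 2, (B₀ + B₁ - B₂ + B₃ + 1) / 2, 1 - B₀ - B₂⟩

/-- The swap `α₂ ↔ α₃`. -/
def swapAl (p : HGParam) : HGParam := ⟨p.a0, p.a1, p.a3, p.a2, p.b1, p.b2, p.b3⟩

/-- The swap `β₁ ↔ β₂`. -/
def swapBe (p : HGParam) : HGParam := ⟨p.a0, p.a1, p.a2, p.a3, p.b2, p.b1, p.b3⟩

end Stmt14

open Stmt14

open Stmt14

namespace Stmt14

open Filter
open scoped Polynomial

/-- The balanced tuple with `α₀ = 0` in coordinates adapted to the symmetries of `H⁽⁰⁾`. -/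
noncomputable def paramOf (A b g h k : ℂ) : HGParam :=
  ⟨0, A + b, (-A + b - g + h + k + 1) / 2, (-A + b + g - h + k + 1) / 2,
    (A + b + g + h + k + 1) / 2, (A + b - g - h + k + 1) / 2, 1 + b - A⟩

theorem exists_eq_paramOf (p : HGParam) (hp0 : p.a0 = 0)
    (hbal : p.b1 + p.b2 + p.b3 - p.a1 - p.a2 - p.a3 = 1) :
    ∃ A b g h k : ℂ, p = paramOf A b g h k := by
  obtain ⟨a0, a1, a2, a3, b1, b2, b3⟩ := p
  simp only at hp0 hbal
  refine ⟨(1 + a1 - b3) / 2, a1 - (1 + a1 - b3) / 2, b1 - a2 - (1 + a1 - b3) / 2,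
    b1 - a3 - (1 + a1 - b3) / 2, b1 + b2 - a1 - 1, ?_⟩
  simp only [paramOf, HGParam.mk.injEq]
  refine ⟨hp0, ?_, ?_, ?_, ?_, ?_, ?_⟩
  · ring
  · linear_combination (-1 / 2 : ℂ) * hbal
  · linear_combination (-1 / 2 : ℂ) * hbal
  · linear_combination (-1 / 2 : ℂ) * hbal
  · linear_combination (1 / 2 : ℂ) * hbal
  · ring

theorem swapAl_paramOf (A b g h k : ℂ) :
    swapAl (paramOf A b g h k) = paramOf A b h g k := by
  simp only [paramOf, swapAl]
  congr 1 <;> ring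

theorem swapBe_paramOf (A b g h k : ℂ) :
    swapBe (paramOf A b g h k) = paramOf A b (-h) (-g) k := by
  simp only [paramOf, swapBe]
  congr 1 <;> ring

theorem T1_eq_paramOf (B₀ B₁ B₂ B₃ : ℂ) :
    T1 B₀ B₁ B₂ B₃ = paramOf B₀ 0 (-B₃) (-B₂) B₁ := by
  simp only [paramOf, T1]
  congr 1 <;> ring

theorem T2_eq_paramOf (B₀ B₁ B₂ B₃ : ℂ) :
    T2 B₀ B₁ B₂ B₃ = paramOf B₀ (-B₂) (-B₃) 0 B₁ := by
  simp only [paramOf, T2]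
  congr 1 <;> ring

section Polynomials

variable {R : Type*} [CommRing R]

/-- The quartic `t² + βt + γ` in `t = m(m - 1)`. -/
def quartic (β γ m : R) : R := (m * (m - 1)) ^ 2 + β * (m * (m - 1)) + γ

/-- The numerator of `-H⁽⁰⁾` as an even polynomial in the centred variable. -/
def numF (β γ m : R) : R := (4 * m ^ 2 - 1) * (quartic β γ m * quartic β γ (m + 1))

/-- The denominator of `-H⁽⁰⁾` as an even polynomial in the centred variable. -/
def denF (A b g h m : R) : R :=
  (m ^ 2 - 1) * (m ^ 2 - A ^ 2) * ((m ^ 2 - b ^ 2) * (m ^ 2 - g ^ 2) * (m ^ 2 - h ^ 2))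

/-- The numerator of `-H₀` as an even polynomial in the centred variable. -/
def numA (K m : R) : R :=
  (4 * m ^ 2 - 1) * ((m * (m - 1) + K) * (m * (m + 1) + K))

/-- The denominator of `-H₀` as an even polynomial in the centred variable. -/
def denA (A₀ A₂ A₃ m : R) : R := (m ^ 2 - A₀ ^ 2) * (m ^ 2 - A₂ ^ 2) * (m ^ 2 - A₃ ^ 2)

theorem numF_neg (β γ m : R) : numF β γ (-m) = numF β γ m := by
  simp only [numF, quartic]; ring

theorem denF_neg (A b g h m : R) : denF A b g h (-m) = denF A b g h m := by
  simp only [denF]; ring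

theorem numA_neg (K m : R) : numA K (-m) = numA K m := by
  simp only [numA]; ring

theorem denA_neg (A₀ A₂ A₃ m : R) : denA A₀ A₂ A₃ (-m) = denA A₀ A₂ A₃ m := by
  simp only [denA]; ring

end Polynomials

/-- The linear coefficient of the quartic attached to a tuple. -/
noncomputable def coeffB (A b g h k : ℂ) : ℂ :=
  (k ^ 2 + 1 - A ^ 2 - b ^ 2 - g ^ 2 - h ^ 2) / 2

/-- The constant coefficient in the factors of the numerator of `H₀`. -/
noncomputable def coeffA (A₀ A₁ A₂ A₃ : ℂ) : ℂ :=
  (1 - A₀ ^ 2 + A₁ ^ 2 - A₂ ^ 2 - A₃ ^ 2) / 2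

theorem H0Def_iff (A₀ A₁ A₂ A₃ : ℂ) (n : ℕ) :
    H0Def A₀ A₁ A₂ A₃ n ↔ denA A₀ A₂ A₃ (n - A₀) ≠ 0 := by
  have : 4 * (n : ℂ) * ((n : ℂ) - 2 * A₀) * ((n : ℂ) - A₀ - A₂) * ((n : ℂ) - A₀ + A₂)
      * ((n : ℂ) - A₀ - A₃) * ((n : ℂ) - A₀ + A₃) = 4 * denA A₀ A₂ A₃ (n - A₀) := by
    simp only [denA]; ring
  rw [H0Def, this]
  simp

theorem H0_eq (A₀ A₁ A₂ A₃ : ℂ) (n : ℕ) :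
    H0 A₀ A₁ A₂ A₃ n =
      -(numA (coeffA A₀ A₁ A₂ A₃) (n - A₀) / denA A₀ A₂ A₃ (n - A₀)) := by
  have h1 : 4 * (n : ℂ) * ((n : ℂ) - 2 * A₀) * ((n : ℂ) - A₀ - A₂) * ((n : ℂ) - A₀ + A₂)
      * ((n : ℂ) - A₀ - A₃) * ((n : ℂ) - A₀ + A₃) = 4 * denA A₀ A₂ A₃ (n - A₀) := by
    simp only [denA]; ring
  have h2 : -((4 * ((n : ℂ) - A₀) ^ 2 - 1)
      * ((2 * (n : ℂ) ^ 2 - 4 * A₀ * (n : ℂ) + A₀ ^ 2 + A₁ ^ 2 - A₂ ^ 2 - A₃ ^ 2 + 1) ^ 2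
          - 4 * ((n : ℂ) - A₀) ^ 2)) = 4 * -numA (coeffA A₀ A₁ A₂ A₃) (n - A₀) := by
    simp only [numA, coeffA]; ring
  rw [H0, h1, h2, mul_div_mul_left _ _ (by norm_num), neg_div]

/-- The tuple `paramOf A b g h k` shifted by `-(m + A)·e₁₂`. -/
noncomputable def centred (A b g h k m : ℂ) : HGParam :=
  ⟨-(m + A), b - m, (-A + b - g + h + k + 1) / 2, (-A + b + g - h + k + 1) / 2,
    (b - A + g + h + k + 1) / 2 - m, (b - A - g - h + k + 1) / 2 - m, 1 + b - A⟩

theorem shiftn_paramOf (A b g h k : ℂ) (n : ℕ) :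
    shiftn (paramOf A b g h k) n = centred A b g h k (n - A) := by
  simp only [paramOf, shiftn, centred]
  congr 1 <;> ring

theorem U1_centred (A b g h k m : ℂ) : U1 (centred A b g h k m) =
    ((1 - A - b + g + h + k) / 2 * (2 * m)) /
      (((b - A + g + h + k + 1) / 2 - m) * (m + b)) := by
  simp only [U1, centred]; ring_nf

theorem V1_centred (A b g h k m : ℂ) : V1 (centred A b g h k m) =
    ((m - b) * (m + h) * (m + g)) / (((b - A + g + h + k + 1) / 2 - m) *
      ((b - A - g - h + k + 1) / 2 - m) * (m + b)) := by
  simp only [V1, centred]; ring_nf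

theorem U2_centred (A b g h k m : ℂ) : U2 (e1 (centred A b g h k m)) =
    ((A + b - g - h + k - 1) / 2 * (2 * m - 1)) /
      (((b - A - g - h + k + 1) / 2 - m) * (m - A)) := by
  simp only [U2, centred, e1]; ring_nf

theorem V2_centred (A b g h k m : ℂ) : V2 (e1 (centred A b g h k m)) =
    ((m + A - 1) * (m - 1 - g) * (m - 1 - h)) / (((b - A + g + h + k + 1) / 2 - (m - 1)) *
      ((b - A - g - h + k + 1) / 2 - m) * (m - A)) := by
  simp only [V2, centred, e1]; ring_nf

theorem e12_centred (A b g h k m : ℂ) :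
    e12 (centred A b g h k m) = centred A b g h k (m - 1) := by
  simp only [centred, e12]
  congr 1 <;> ring

theorem q1_centred {A b g h k m : ℂ} (hd : Q1Def (centred A b g h k m)) :
    q1 (centred A b g h k m) = (2 * m - 1) * quartic (coeffB A b g h k) (A * b * g * h) m /
      (((b - A + g + h + k + 1) / 2 - m) * ((b - A - g - h + k + 1) / 2 - m) * (m + b) *
        (m - A) * (m - 1)) := by
  obtain ⟨h1, h2, h3, h4, h5, h6, h7⟩ := hd
  rw [e12_centred, U1_centred] at h7
  rw [q1, e12_centred, U1_centred, U1_centred, V1_centred, U2_centred, V2_centred]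
  simp only [centred] at h1 h2 h3 h4 h5 h6
  obtain ⟨h8, h9⟩ := div_ne_zero_iff.1 h7
  obtain ⟨h10, h11⟩ := mul_ne_zero_iff.1 h8
  obtain ⟨h12, h13⟩ := mul_ne_zero_iff.1 h9
  have h14 : m - 1 ≠ 0 := fun h => h11 (by rw [h, mul_zero])
  have h15 : m + b ≠ 0 := fun h => h4 (by linear_combination h)
  have h16 : m - A ≠ 0 := fun h => h6 (by linear_combination h)
  generalize hc : (1 - A - b + g + h + k) / 2 = c at *
  generalize hx : (b - A + g + h + k + 1) / 2 = x at *
  generalize hy : (b - A - g - h + k + 1) / 2 = y at *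
  field_simp
  simp only [quartic, coeffB]
  subst hc
  ring

theorem q2_centred {A b g h k m : ℂ} (hd : Q2Def (centred A b g h k (m + 1))) :
    q2 (centred A b g h k (m + 1)) =
      -((m - b) * (m + A) * (m + 1) * ((m - g) * (m - h) * (m + g) * (m + h))) /
      ((((b - A + g + h + k + 1) / 2 - m) * ((b - A - g - h + k + 1) / 2 - m)) *
        (((b - A + g + h + k + 1) / 2 - (m + 1)) * ((b - A - g - h + k + 1) / 2 - (m + 1))) *
        (m + 1 + b) * (m + 1 - A) * m) := by
  obtain ⟨h1, h2, h3, h4, h5, h6, h7, h8⟩ := hd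
  rw [e12_centred, U1_centred, add_sub_cancel_right] at h8
  rw [q2, e12_centred, U1_centred, U1_centred, V1_centred, V2_centred, add_sub_cancel_right]
  simp only [centred] at h1 h2 h3 h4 h5 h6 h7
  obtain ⟨h9, h10⟩ := div_ne_zero_iff.1 h8
  obtain ⟨h11, h12⟩ := mul_ne_zero_iff.1 h9
  obtain ⟨h13, h14⟩ := mul_ne_zero_iff.1 h10
  have h15 : m ≠ 0 := fun h => h12 (by rw [h, mul_zero])
  have h16 : m + 1 + b ≠ 0 := fun h => h5 (by linear_combination h)
  have h17 : m + 1 - A ≠ 0 := fun h => h7 (by linear_combination h)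
  have h18 : (b - A - g - h + k + 1) / 2 - m ≠ 0 := fun h => h4 (by linear_combination h)
  clear h3 h4 h5 h6 h7 h8 h9 h10 h12
  generalize (1 - A - b + g + h + k) / 2 = c at *
  generalize (b - A + g + h + k + 1) / 2 = x at *
  generalize (b - A - g - h + k + 1) / 2 = y at *
  field_simp
  ring

theorem denF_ne_zero {A b g h k : ℂ} {n : ℕ} (hd : HFDef (paramOf A b g h k) n) :
    denF A b g h (n - A) ≠ 0 := by
  obtain ⟨hq, -, hq', h2⟩ := hd
  have e : ((n + 1 : ℕ) : ℂ) - A = (n - A) + 1 := by push_cast; ring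
  rw [shiftn_paramOf] at hq
  rw [shiftn_paramOf, e] at hq' h2
  generalize (n : ℂ) - A = m at *
  rw [q2_centred hq'] at h2
  obtain ⟨-, -, -, h4, -, h6, h7⟩ := hq
  rw [e12_centred, U1_centred] at h7
  simp only [centred] at h4 h6
  simp only [div_ne_zero_iff, mul_ne_zero_iff, neg_ne_zero] at h7 h2
  obtain ⟨⟨⟨⟨i1, i2⟩, i3⟩, ⟨i4, i5⟩, i6⟩, i7⟩ := h2
  have h15 : m + b ≠ 0 := fun h => h4 (by linear_combination h)
  have h16 : m - A ≠ 0 := fun h => h6 (by linear_combination h)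
  have : denF A b g h m = (m - 1) * (m + 1) * ((m - A) * (m + A)) *
      ((m - b) * (m + b) * ((m - g) * (m + g)) * ((m - h) * (m + h))) := by
    simp only [denF]; ring
  rw [this]
  simp only [mul_ne_zero_iff]
  tauto

theorem HF_eq {A b g h k : ℂ} {n : ℕ} (hd : HFDef (paramOf A b g h k) n) :
    HF (paramOf A b g h k) n =
      -(numF (coeffB A b g h k) (A * b * g * h) (n - A) / denF A b g h (n - A)) := by
  have hne := denF_ne_zero hd
  obtain ⟨hq, hq1, hq', h2⟩ := hd
  have e : ((n + 1 : ℕ) : ℂ) - A = (n - A) + 1 := by push_cast; ring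
  rw [shiftn_paramOf] at hq
  rw [shiftn_paramOf, e] at hq' h2 hq1
  rw [HF, shiftn_paramOf, shiftn_paramOf, e]
  generalize (n : ℂ) - A = m at *
  rw [q2_centred hq'] at h2 ⊢
  rw [q1_centred hq, q1_centred hq1]
  have hfac : denF A b g h m = (m - 1) * (m + 1) * ((m - A) * (m + A)) *
      ((m - b) * (m + b) * ((m - g) * (m + g)) * ((m - h) * (m + h))) := by
    simp only [denF]; ring
  rw [hfac] at hne ⊢
  simp only [div_ne_zero_iff, mul_ne_zero_iff, neg_ne_zero] at h2 hne
  obtain ⟨⟨⟨⟨i1, i2⟩, i3⟩, ⟨i4, i5⟩, i6⟩, ⟨⟨⟨⟨j1, j2⟩, j3, j4⟩, j5⟩, j6⟩, j7⟩ := h2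
  obtain ⟨⟨⟨k1, k2⟩, k3, k4⟩, ⟨⟨k5, k6⟩, k7, k8⟩, k9, k10⟩ := hne
  rw [numF]
  generalize quartic (coeffB A b g h k) (A * b * g * h) m = s
  generalize quartic (coeffB A b g h k) (A * b * g * h) (m + 1) = t
  generalize (b - A + g + h + k + 1) / 2 = x at *
  generalize (b - A - g - h + k + 1) / 2 = y at *
  rw [add_sub_cancel_right m 1]
  field_simp
  ring

theorem eventually_natCast_ne (c : ℂ) : ∀ᶠ n : ℕ in atTop, (n : ℂ) ≠ c := by
  have : Set.Finite {n : ℕ | (n : ℂ) = c} :=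
    Set.Subsingleton.finite fun a ha b hb => Nat.cast_injective (R := ℂ) (ha.trans hb.symm)
  simpa [Nat.cofinite_eq_atTop] using this.compl_mem_cofinite

theorem eval_eq_of_eventually_natCast (P Q : ℂ[X])
    (h : ∀ᶠ n : ℕ in atTop, P.eval (n : ℂ) = Q.eval (n : ℂ)) (z : ℂ) : P.eval z = Q.eval z := by
  suffices P = Q by rw [this]
  refine Polynomial.eq_of_infinite_eval_eq P Q ?_
  have h1 : {n : ℕ | P.eval (n : ℂ) = Q.eval (n : ℂ)}.Infinite :=
    Nat.frequently_atTop_iff_infinite.1 h.frequently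
  exact (h1.image (Nat.cast_injective (R := ℂ)).injOn).mono (by rintro _ ⟨n, hn, rfl⟩; exact hn)

section Independence

variable {A₀ A₁ A₂ A₃ : ℂ}

theorem aeval_ne_zero_of_eval_ne_zero (hind : AlgebraicIndependent ℚ ![A₀, A₁, A₂, A₃])
    (P : MvPolynomial (Fin 4) ℚ) (v : Fin 4 → ℚ) (hv : MvPolynomial.eval v P ≠ 0) :
    MvPolynomial.aeval ![A₀, A₁, A₂, A₃] P ≠ 0 := by
  intro h
  rw [hind.eq_zero_of_aeval_eq_zero P h] at hv
  exact hv (map_zero _)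

open MvPolynomial in
theorem linear_ne_zero (hind : AlgebraicIndependent ℚ ![A₀, A₁, A₂, A₃]) (r₁ r₂ r₃ : ℚ) :
    1 - A₀ + r₁ * A₁ + r₂ * A₂ + r₃ * A₃ ≠ 0 := by
  have := aeval_ne_zero_of_eval_ne_zero hind
    (1 - X 0 + C r₁ * X 1 + C r₂ * X 2 + C r₃ * X 3) 0 (by simp)
  simpa using this

theorem sq_ne_ratCast (hind : AlgebraicIndependent ℚ ![A₀, A₁, A₂, A₃]) (i : Fin 4) (r : ℚ) :
    (![A₀, A₁, A₂, A₃] i) ^ 2 ≠ r := by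
  have hr : (r + 2) ^ 2 - r ≠ 0 := by nlinarith [sq_nonneg (r + 1)]
  have := aeval_ne_zero_of_eval_ne_zero hind
    (MvPolynomial.X i ^ 2 - MvPolynomial.C r) (fun _ => r + 2) (by simpa using hr)
  simpa [sub_eq_zero] using this

theorem sq_ne_sq_of_algebraicIndependent (hind : AlgebraicIndependent ℚ ![A₀, A₁, A₂, A₃])
    {i j : Fin 4} (hij : i ≠ j) :
    (![A₀, A₁, A₂, A₃] i) ^ 2 ≠ (![A₀, A₁, A₂, A₃] j) ^ 2 := by
  have := aeval_ne_zero_of_eval_ne_zero hind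
    (MvPolynomial.X i ^ 2 - MvPolynomial.X j ^ 2) (Pi.single i 1) (by simp [hij.symm])
  simpa [sub_eq_zero] using this

open MvPolynomial in
theorem sq_coeffA_ne (hind : AlgebraicIndependent ℚ ![A₀, A₁, A₂, A₃]) :
    coeffA A₀ A₁ A₂ A₃ ^ 2 ≠ A₀ ^ 2 * A₂ ^ 2 * A₃ ^ 2 := by
  have := aeval_ne_zero_of_eval_ne_zero hind
    ((C (1 / 2) * (1 - X 0 ^ 2 + X 1 ^ 2 - X 2 ^ 2 - X 3 ^ 2)) ^ 2 - X 0 ^ 2 * X 2 ^ 2 * X 3 ^ 2)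
    0 (by simp)
  intro h
  apply this
  simp only [coeffA] at h
  simp
  linear_combination h

open MvPolynomial in
theorem numA_ne_zero (hind : AlgebraicIndependent ℚ ![A₀, A₁, A₂, A₃])
    (M : MvPolynomial (Fin 4) ℚ) (v : Fin 4 → ℚ)
    (hv : numA (1 / 2 * (1 - v 0 ^ 2 + v 1 ^ 2 - v 2 ^ 2 - v 3 ^ 2)) (eval v M) ≠ 0) :
    numA (coeffA A₀ A₁ A₂ A₃) (aeval ![A₀, A₁, A₂, A₃] M) ≠ 0 := by
  have := aeval_ne_zero_of_eval_ne_zero hind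
    (numA (C (1 / 2) * (1 - X 0 ^ 2 + X 1 ^ 2 - X 2 ^ 2 - X 3 ^ 2)) M) v
    (by simpa [numA] using hv)
  intro h
  apply this
  rw [← h]
  simp [numA, coeffA, div_eq_inv_mul]

theorem numA_natCast_sub_ne_zero (hind : AlgebraicIndependent ℚ ![A₀, A₁, A₂, A₃]) (n : ℕ) :
    numA (coeffA A₀ A₁ A₂ A₃) (n - A₀) ≠ 0 := by
  have := numA_ne_zero hind ((n : MvPolynomial (Fin 4) ℚ) - MvPolynomial.X 0) ![n, n, 0, 0] (by simp [numA])
  simpa using this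

theorem numA_apply_ne_zero (hind : AlgebraicIndependent ℚ ![A₀, A₁, A₂, A₃]) (i : Fin 4) :
    numA (coeffA A₀ A₁ A₂ A₃) (![A₀, A₁, A₂, A₃] i) ≠ 0 := by
  have := numA_ne_zero hind (MvPolynomial.X i) 0 (by simp [numA])
  simpa using this

theorem numA_two_ne_zero (hind : AlgebraicIndependent ℚ ![A₀, A₁, A₂, A₃]) :
    numA (coeffA A₀ A₁ A₂ A₃) 2 ≠ 0 := by
  have := numA_ne_zero hind (MvPolynomial.C 2) 0 (by norm_num [numA])
  simpa using this

end Independence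

section Rigidity

variable {A₀ A₁ A₂ A₃ : ℂ}

theorem numA_ne_zero_of_denA_eq_zero (hind : AlgebraicIndependent ℚ ![A₀, A₁, A₂, A₃]) {m : ℂ}
    (hm : denA A₀ A₂ A₃ m = 0) : numA (coeffA A₀ A₁ A₂ A₃) m ≠ 0 := by
  have key : ∀ i : Fin 4, m ^ 2 - ![A₀, A₁, A₂, A₃] i ^ 2 = 0 →
      numA (coeffA A₀ A₁ A₂ A₃) m ≠ 0 := by
    intro i hi
    rcases sq_eq_sq_iff_eq_or_eq_neg.1 (sub_eq_zero.1 hi) with h | h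
    · rw [h]; exact numA_apply_ne_zero hind i
    · rw [h, numA_neg]; exact numA_apply_ne_zero hind i
  rcases mul_eq_zero.1 hm with h | h
  · rcases mul_eq_zero.1 h with h | h
    · exact key 0 h
    · exact key 2 h
  · exact key 3 h

/-- The invariant `H₀` has no nontrivial period. -/
theorem eq_zero_of_period (hind : AlgebraicIndependent ℚ ![A₀, A₁, A₂, A₃]) {d : ℂ}
    (h : ∀ m, numA (coeffA A₀ A₁ A₂ A₃) m * denA A₀ A₂ A₃ (m + d) =
      numA (coeffA A₀ A₁ A₂ A₃) (m + d) * denA A₀ A₂ A₃ m) : d = 0 := by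
  by_contra hd
  have hroot : ∀ j : ℕ, denA A₀ A₂ A₃ (A₀ + j * d) = 0 := by
    intro j
    induction j with
    | zero => simp [denA]
    | succ j ih =>
      have h1 := h (A₀ + j * d)
      rw [ih, mul_zero] at h1
      have h2 := (mul_eq_zero.1 h1).resolve_left (numA_ne_zero_of_denA_eq_zero hind ih)
      rw [← h2]
      push_cast
      ring_nf
  have hfin : {m : ℂ | denA A₀ A₂ A₃ m = 0}.Finite := by
    refine Set.Finite.subset (Set.toFinite {A₀, -A₀, A₂, -A₂, A₃, -A₃}) ?_
    intro m hm
    simp only [denA, Set.mem_ofPred_eq, mul_eq_zero, sub_eq_zero, sq_eq_sq_iff_eq_or_eq_neg] at hm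
    simp only [Set.mem_insert_iff, Set.mem_singleton_iff]
    tauto
  refine Set.infinite_of_injective_forall_mem (f := fun j : ℕ => A₀ + j * d) ?_ hroot hfin
  intro i j hij
  simpa [hd] using hij

theorem centre_eq (hind : AlgebraicIndependent ℚ ![A₀, A₁, A₂, A₃]) {A b g h β γ : ℂ}
    (hid : ∀ z, numF β γ (z - A) * denA A₀ A₂ A₃ (z - A₀) =
      numA (coeffA A₀ A₁ A₂ A₃) (z - A₀) * denF A b g h (z - A))
    (hne : ∀ᶠ n : ℕ in atTop, numF β γ (n - A) ≠ 0 ∧ denF A b g h (n - A) ≠ 0) :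
    A = A₀ := by
  suffices 2 * (A₀ - A) = 0 by
    have := (mul_eq_zero.1 this).resolve_left two_ne_zero
    exact (sub_eq_zero.1 this).symm
  refine eq_zero_of_period hind fun m => ?_
  have key := eval_eq_of_eventually_natCast
    (numA (.C (coeffA A₀ A₁ A₂ A₃)) (.X - .C A₀) *
      denA (.C A₀) (.C A₂) (.C A₃) (.X - .C A₀ + .C (2 * (A₀ - A))))
    (numA (.C (coeffA A₀ A₁ A₂ A₃)) (.X - .C A₀ + .C (2 * (A₀ - A))) *
      denA (.C A₀) (.C A₂) (.C A₃) (.X - .C A₀)) ?_ (m + A₀)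
  · simpa [numA, denA] using key
  filter_upwards [hne] with n hn
  have h1 := hid n
  have h2 := hid (2 * A - n)
  have e1 : 2 * A - n - A = -(n - A) := by ring
  have e2 : 2 * A - n - A₀ = -(n - A₀ + 2 * (A₀ - A)) := by ring
  rw [e1, e2, numF_neg, denF_neg, numA_neg, denA_neg] at h2
  have h3 : numA (coeffA A₀ A₁ A₂ A₃) (n - A₀) * denA A₀ A₂ A₃ (n - A₀ + 2 * (A₀ - A)) =
      numA (coeffA A₀ A₁ A₂ A₃) (n - A₀ + 2 * (A₀ - A)) * denA A₀ A₂ A₃ (n - A₀) := by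
    apply mul_left_cancel₀ (mul_ne_zero hn.1 hn.2)
    linear_combination numA (coeffA A₀ A₁ A₂ A₃) (n - A₀) * denF A b g h (n - A) * h2 -
      numA (coeffA A₀ A₁ A₂ A₃) (n - A₀ + 2 * (A₀ - A)) * denF A b g h (n - A) * h1
  simpa [numA, denA] using h3

/-- If the numerators match after cancelling the factors `m² - A₂²` and `m² - A₃²`, the remaining
free parameters are determined up to sign. -/
theorem third_eq_zero (hind : AlgebraicIndependent ℚ ![A₀, A₁, A₂, A₃]) {b k β γ : ℂ}
    (hβ : 2 * β = k ^ 2 + 1 - A₀ ^ 2 - b ^ 2 - A₂ ^ 2 - A₃ ^ 2)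
    (hγ : γ ^ 2 = A₀ ^ 2 * b ^ 2 * A₂ ^ 2 * A₃ ^ 2)
    (hid : ∀ m, numF β γ m * denA A₀ A₂ A₃ m = numA (coeffA A₀ A₁ A₂ A₃) m *
      ((m ^ 2 - 1) * (m ^ 2 - A₀ ^ 2) * ((m ^ 2 - b ^ 2) * (m ^ 2 - A₂ ^ 2) * (m ^ 2 - A₃ ^ 2)))) :
    b = 0 ∧ k ^ 2 = A₁ ^ 2 := by
  have hid' : ∀ m : ℕ, numF β γ m =
      numA (coeffA A₀ A₁ A₂ A₃) m * (((m : ℂ) ^ 2 - 1) * ((m : ℂ) ^ 2 - b ^ 2)) := by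
    intro m
    have hm : ∀ i, (m : ℂ) ^ 2 - ![A₀, A₁, A₂, A₃] i ^ 2 ≠ 0 := fun i hi =>
      sq_ne_ratCast hind i ((m : ℚ) ^ 2) (by push_cast; linear_combination -hi)
    have hd : denA A₀ A₂ A₃ (m : ℂ) ≠ 0 := mul_ne_zero (mul_ne_zero (hm 0) (hm 2)) (hm 3)
    apply mul_right_cancel₀ hd
    rw [hid]
    simp only [denA]
    ring
  have h0 := hid' 0
  have h1 := hid' 1
  have h2 := hid' 2
  have h3 := hid' 3
  have hT := numA_two_ne_zero hind
  have hK := sq_coeffA_ne hind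
  have hA : ∀ i, ![A₀, A₁, A₂, A₃] i ≠ 0 := fun i hi => sq_ne_ratCast hind i 0 (by simp [hi])
  have hA0 : A₀ ≠ 0 := hA 0
  have hA2 : A₂ ≠ 0 := hA 2
  have hA3 : A₃ ≠ 0 := hA 3
  have hk : 2 * coeffA A₀ A₁ A₂ A₃ = 1 - A₀ ^ 2 + A₁ ^ 2 - A₂ ^ 2 - A₃ ^ 2 := by
    simp only [coeffA]; ring
  generalize coeffA A₀ A₁ A₂ A₃ = K at *
  simp only [numF, numA, quartic] at h0 h1 h2 h3 hT
  norm_num at h0 h1 h2 h3 hT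
  have hγ0 : γ = 0 := by
    rcases h1 with h | h
    · exact h
    · have hb : (4 : ℂ) - b ^ 2 = 0 := by
        have h4 : 15 * ((2 + K) * (6 + K)) * (3 * (4 - b ^ 2)) = 0 := by
          rw [← h2]; linear_combination 15 * (36 + β * 6 + γ) * h
        simpa [hT] using h4
      exfalso
      apply hK
      have : 4 * K ^ 2 = γ ^ 2 := by linear_combination -h0 + K ^ 2 * hb
      linear_combination (1 / 4 : ℂ) * this + (1 / 4 : ℂ) * hγ - A₀ ^ 2 * A₂ ^ 2 * A₃ ^ 2 / 4 * hb
  have hb : b = 0 := by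
    rw [hγ0] at hγ
    simpa [hA0, hA2, hA3] using hγ.symm
  refine ⟨hb, ?_⟩
  subst hb hγ0
  have : β = K := by
    linear_combination (1 / 25200 : ℂ) * h3 - (1 / 1800 : ℂ) * h2
  linear_combination 2 * this - hβ + hk
end Rigidity

section Definedness

variable {A b g h k : ℂ}

theorem eventually_Q2Def (hne : 1 - A - b + g + h + k ≠ 0) :
    ∀ᶠ n : ℕ in atTop, Q2Def (centred A b g h k (n - A)) := by
  have E := eventually_natCast_ne
  filter_upwards [E ((A + b + g + h + k + 1) / 2), E ((A + b - g - h + k + 1) / 2),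
    E ((A + b + g + h + k + 1) / 2 + 1), E ((A + b - g - h + k + 1) / 2 + 1), E (A - b),
    E (A - b + 1), E (2 * A), E (A + 1)] with n h1 h2 h3 h4 h5 h6 h7 h8
  rw [Q2Def, e12_centred, U1_centred]
  simp only [centred]
  refine ⟨fun e => h1 ?_, fun e => h2 ?_, fun e => h3 ?_, fun e => h4 ?_, fun e => h5 ?_,
    fun e => h6 ?_, fun e => h7 ?_, div_ne_zero (mul_ne_zero (div_ne_zero hne two_ne_zero)
      (mul_ne_zero two_ne_zero fun e => h8 ?_)) (mul_ne_zero (fun e => h3 ?_) fun e => h6 ?_)⟩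
  · linear_combination -e
  · linear_combination -e
  · linear_combination -e
  · linear_combination -e
  · linear_combination e
  · linear_combination e
  · linear_combination e
  · linear_combination e
  · linear_combination -e
  · linear_combination e

theorem Q1Def_of_Q2Def {p : HGParam} (hp : Q2Def p) : Q1Def p :=
  ⟨hp.1, hp.2.1, hp.2.2.1, hp.2.2.2.2⟩

theorem eventually_HFDef (hne : 1 - A - b + g + h + k ≠ 0) :
    ∀ᶠ n : ℕ in atTop, HFDef (paramOf A b g h k) n := by
  have E := eventually_natCast_ne
  have hQ := eventually_Q2Def hne
  filter_upwards [hQ, (tendsto_add_atTop_nat 1).eventually hQ, E (A + b), E 0, E (A - 1),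
    E (A + g), E (A + h), E (A - g), E (A - h), E A] with n hn hn1 h1 h2 h3 h4 h5 h6 h7 h8
  rw [HFDef, shiftn_paramOf, shiftn_paramOf]
  refine ⟨Q1Def_of_Q2Def hn, Q1Def_of_Q2Def hn1, hn1, ?_⟩
  have e : ((n + 1 : ℕ) : ℂ) - A = (n - A) + 1 := by push_cast; ring
  rw [e] at hn1 ⊢
  rw [q2_centred hn1]
  obtain ⟨i1, i2, -, -, i5, -, i7, -⟩ := hn1
  obtain ⟨j1, j2, -⟩ := hn
  simp only [centred] at i1 i2 i5 i7 j1 j2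
  refine div_ne_zero (neg_ne_zero.2 (mul_ne_zero (mul_ne_zero (mul_ne_zero (fun e => h1 ?_)
    fun e => h2 ?_) fun e => h3 ?_) (mul_ne_zero (mul_ne_zero (mul_ne_zero (fun e => h4 ?_)
    fun e => h5 ?_) fun e => h6 ?_) fun e => h7 ?_)))
    (mul_ne_zero (mul_ne_zero (mul_ne_zero (mul_ne_zero (mul_ne_zero j1 j2) (mul_ne_zero i1 i2))
      fun e => i5 ?_) fun e => i7 ?_) fun e => h8 ?_) <;> linear_combination e

end Definedness

variable {A₀ A₁ A₂ A₃ : ℂ}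

theorem eventually_H0Def (A₀ A₁ A₂ A₃ : ℂ) : ∀ᶠ n : ℕ in atTop, H0Def A₀ A₁ A₂ A₃ n := by
  have E := eventually_natCast_ne
  filter_upwards [E 0, E (2 * A₀), E (A₀ + A₂), E (A₀ - A₂), E (A₀ + A₃), E (A₀ - A₃)]
    with n h1 h2 h3 h4 h5 h6
  rw [H0Def]
  refine mul_ne_zero (mul_ne_zero (mul_ne_zero (mul_ne_zero (mul_ne_zero (mul_ne_zero
    (by norm_num) h1) (sub_ne_zero.2 h2)) fun e => h3 ?_) fun e => h4 ?_) fun e => h5 ?_)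
    fun e => h6 ?_ <;> linear_combination e

theorem H0_eq_HF {b g h k : ℂ} (hk : k ^ 2 = A₁ ^ 2) (h3 : b * g * h = 0)
    (h1 : b ^ 2 + g ^ 2 + h ^ 2 = A₂ ^ 2 + A₃ ^ 2)
    (h2 : b ^ 2 * g ^ 2 + b ^ 2 * h ^ 2 + g ^ 2 * h ^ 2 = A₂ ^ 2 * A₃ ^ 2) {n : ℕ}
    (hd0 : H0Def A₀ A₁ A₂ A₃ n) (hd : HFDef (paramOf A₀ b g h k) n) :
    H0 A₀ A₁ A₂ A₃ n = HF (paramOf A₀ b g h k) n := by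
  have hF := denF_ne_zero hd
  rw [H0_eq, HF_eq hd, neg_inj, div_eq_div_iff ((H0Def_iff _ A₁ _ _ _).1 hd0) hF]
  have hγ : A₀ * b * g * h = 0 := by linear_combination A₀ * h3
  have hβ : coeffB A₀ b g h k = coeffA A₀ A₁ A₂ A₃ := by
    simp only [coeffA, coeffB]
    linear_combination (1 / 2 : ℂ) * hk - (1 / 2 : ℂ) * h1
  generalize (n : ℂ) - A₀ = m
  have hD : denF A₀ b g h m = m ^ 2 * (m ^ 2 - 1) * denA A₀ A₂ A₃ m := by
    simp only [denF, denA]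
    linear_combination (m ^ 2 - 1) * (m ^ 2 - A₀ ^ 2) *
      (-m ^ 4 * h1 + m ^ 2 * h2 - b * g * h * h3)
  rw [hγ, hβ, hD]
  simp only [numA, numF, quartic]
  ring

theorem eq_or_of_identity (hind : AlgebraicIndependent ℚ ![A₀, A₁, A₂, A₃]) {b g h k : ℂ}
    (hid : ∀ m, numF (coeffB A₀ b g h k) (A₀ * b * g * h) m * denA A₀ A₂ A₃ m =
      numA (coeffA A₀ A₁ A₂ A₃) m * denF A₀ b g h m) :
    k ^ 2 = A₁ ^ 2 ∧
      ((b = 0 ∧ g ^ 2 = A₂ ^ 2 ∧ h ^ 2 = A₃ ^ 2) ∨ (b = 0 ∧ g ^ 2 = A₃ ^ 2 ∧ h ^ 2 = A₂ ^ 2) ∨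
       (g = 0 ∧ b ^ 2 = A₂ ^ 2 ∧ h ^ 2 = A₃ ^ 2) ∨ (g = 0 ∧ b ^ 2 = A₃ ^ 2 ∧ h ^ 2 = A₂ ^ 2) ∨
       (h = 0 ∧ b ^ 2 = A₂ ^ 2 ∧ g ^ 2 = A₃ ^ 2) ∨ (h = 0 ∧ b ^ 2 = A₃ ^ 2 ∧ g ^ 2 = A₂ ^ 2)) := by
  have root : ∀ i : Fin 4, i ≠ 0 → denA A₀ A₂ A₃ (![A₀, A₁, A₂, A₃] i) = 0 →
      b ^ 2 = ![A₀, A₁, A₂, A₃] i ^ 2 ∨ g ^ 2 = ![A₀, A₁, A₂, A₃] i ^ 2 ∨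
        h ^ 2 = ![A₀, A₁, A₂, A₃] i ^ 2 := by
    intro i hi0 hi
    have h1 := hid (![A₀, A₁, A₂, A₃] i)
    rw [hi, mul_zero, eq_comm, mul_eq_zero] at h1
    have h2 := h1.resolve_left (numA_apply_ne_zero hind i)
    have h3 := sq_ne_ratCast hind i 1
    have h4 : ![A₀, A₁, A₂, A₃] i ^ 2 ≠ A₀ ^ 2 := sq_ne_sq_of_algebraicIndependent hind hi0
    push_cast at h3
    simp only [denF, mul_eq_zero, sub_eq_zero, h3, h4, false_or] at h2
    rcases h2 with (h | h) | h
    · exact .inl h.symm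
    · exact .inr (.inl h.symm)
    · exact .inr (.inr h.symm)
  have r2 := root 2 (by decide) (by simp [denA])
  have r3 := root 3 (by decide) (by simp [denA])
  have h23 : A₂ ^ 2 ≠ A₃ ^ 2 := sq_ne_sq_of_algebraicIndependent hind (i := 2) (j := 3) (by decide)
  change b ^ 2 = A₂ ^ 2 ∨ g ^ 2 = A₂ ^ 2 ∨ h ^ 2 = A₂ ^ 2 at r2
  change b ^ 2 = A₃ ^ 2 ∨ g ^ 2 = A₃ ^ 2 ∨ h ^ 2 = A₃ ^ 2 at r3
  have core : ∀ u v w : ℂ, b ^ 2 + g ^ 2 + h ^ 2 = u ^ 2 + v ^ 2 + w ^ 2 →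
      b ^ 2 * g ^ 2 * h ^ 2 = u ^ 2 * v ^ 2 * w ^ 2 →
      (∀ m, denF A₀ b g h m = denF A₀ u v w m) → v ^ 2 = A₂ ^ 2 → w ^ 2 = A₃ ^ 2 →
      u = 0 ∧ k ^ 2 = A₁ ^ 2 := by
    intro u v w h1 h2 h3 hv hw
    refine third_eq_zero hind (b := u) (β := coeffB A₀ b g h k) (γ := A₀ * b * g * h) ?_ ?_ ?_
    · simp only [coeffB]
      linear_combination -h1 - hv - hw
    · rw [← hv, ← hw]
      linear_combination A₀ ^ 2 * h2
    · intro m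
      rw [hid, h3, denF, hv, hw]
  rcases r2 with e2 | e2 | e2 <;> rcases r3 with e3 | e3 | e3
  · exact absurd (e2.symm.trans e3) h23
  · obtain ⟨hz, hk⟩ := core h b g (by ring) (by ring) (by intro m; simp only [denF]; ring) e2 e3
    exact ⟨hk, .inr (.inr (.inr (.inr (.inl ⟨hz, e2, e3⟩))))⟩
  · obtain ⟨hz, hk⟩ := core g b h (by ring) (by ring) (by intro m; simp only [denF]; ring) e2 e3
    exact ⟨hk, .inr (.inr (.inl ⟨hz, e2, e3⟩))⟩
  · obtain ⟨hz, hk⟩ := core h g b (by ring) (by ring) (by intro m; simp only [denF]; ring) e2 e3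
    exact ⟨hk, .inr (.inr (.inr (.inr (.inr ⟨hz, e3, e2⟩))))⟩
  · exact absurd (e2.symm.trans e3) h23
  · obtain ⟨hz, hk⟩ := core b g h rfl rfl (fun _ => rfl) e2 e3
    exact ⟨hk, .inl ⟨hz, e2, e3⟩⟩
  · obtain ⟨hz, hk⟩ := core g h b (by ring) (by ring) (by intro m; simp only [denF]; ring) e2 e3
    exact ⟨hk, .inr (.inr (.inr (.inl ⟨hz, e3, e2⟩)))⟩
  · obtain ⟨hz, hk⟩ := core b h g (by ring) (by ring) (by intro m; simp only [denF]; ring) e2 e3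
    exact ⟨hk, .inr (.inl ⟨hz, e3, e2⟩)⟩
  · exact absurd (e2.symm.trans e3) h23

theorem identity_of_agree (hind : AlgebraicIndependent ℚ ![A₀, A₁, A₂, A₃]) {A b g h k : ℂ}
    (hdef : ∀ᶠ n : ℕ in atTop, H0Def A₀ A₁ A₂ A₃ n ∧ HFDef (paramOf A b g h k) n)
    (heq : ∀ n : ℕ, 1 ≤ n → H0Def A₀ A₁ A₂ A₃ n → HFDef (paramOf A b g h k) n →
      H0 A₀ A₁ A₂ A₃ n = HF (paramOf A b g h k) n) :
    A = A₀ ∧ ∀ m, numF (coeffB A b g h k) (A * b * g * h) (m - A) * denA A₀ A₂ A₃ (m - A₀) =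
      numA (coeffA A₀ A₁ A₂ A₃) (m - A₀) * denF A b g h (m - A) := by
  have hn : ∀ᶠ n : ℕ in atTop, denA A₀ A₂ A₃ (n - A₀) ≠ 0 ∧ denF A b g h (n - A) ≠ 0 ∧
      numF (coeffB A b g h k) (A * b * g * h) (n - A) * denA A₀ A₂ A₃ (n - A₀) =
      numA (coeffA A₀ A₁ A₂ A₃) (n - A₀) * denF A b g h (n - A) := by
    filter_upwards [hdef, eventually_ge_atTop 1] with n hd hn
    have h1 := (H0Def_iff A₀ A₁ A₂ A₃ n).1 hd.1
    have h2 := denF_ne_zero hd.2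
    have h3 := heq n hn hd.1 hd.2
    rw [H0_eq, HF_eq hd.2, neg_inj, div_eq_div_iff h1 h2] at h3
    exact ⟨h1, h2, h3.symm⟩
  have hid : ∀ m, numF (coeffB A b g h k) (A * b * g * h) (m - A) * denA A₀ A₂ A₃ (m - A₀) =
      numA (coeffA A₀ A₁ A₂ A₃) (m - A₀) * denF A b g h (m - A) := by
    intro m
    have key := eval_eq_of_eventually_natCast
      (numF (.C (coeffB A b g h k)) (.C (A * b * g * h)) (.X - .C A) *
        denA (.C A₀) (.C A₂) (.C A₃) (.X - .C A₀))
      (numA (.C (coeffA A₀ A₁ A₂ A₃)) (.X - .C A₀) *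
        denF (.C A) (.C b) (.C g) (.C h) (.X - .C A)) ?_ m
    · simpa [numF, numA, denA, denF, quartic] using key
    · filter_upwards [hn] with n hn
      simpa [numF, numA, denA, denF, quartic] using hn.2.2
  refine ⟨centre_eq hind hid ?_, hid⟩
  filter_upwards [hn] with n hn
  refine ⟨fun h0 => ?_, hn.2.1⟩
  have h1 := hn.2.2
  rw [h0, zero_mul, eq_comm, mul_eq_zero] at h1
  exact h1.elim (numA_natCast_sub_ne_zero hind n) hn.2.1

theorem exists_sign_of_sq_eq_sq {x y : ℂ} (hxy : x ^ 2 = y ^ 2) :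
    ∃ s : ℂ, (s = 1 ∨ s = -1) ∧ x = s * y := by
  rcases sq_eq_sq_iff_eq_or_eq_neg.1 hxy with h | h
  · exact ⟨1, .inl rfl, by rw [h, one_mul]⟩
  · exact ⟨-1, .inr rfl, by rw [h, neg_one_mul]⟩

theorem exists_neg_sign_of_sq_eq_sq {x y : ℂ} (hxy : x ^ 2 = y ^ 2) :
    ∃ s : ℂ, (s = 1 ∨ s = -1) ∧ x = -(s * y) := by
  obtain ⟨s, hs, h⟩ := exists_sign_of_sq_eq_sq (x := -x) (y := y) (by rw [neg_sq, hxy])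
  exact ⟨s, hs, by rw [← h, neg_neg]⟩

/-- The tuple has centre `A₀`, parameter `k`, its remaining parameters have squares
`0, A₂², A₃²` in some order, and are rational combinations of `A₂` and `A₃`. -/
def IsAdmissible (A₀ A₂ A₃ k : ℂ) (p : HGParam) : Prop :=
  ∃ b g h : ℂ, p = paramOf A₀ b g h k ∧ b * g * h = 0 ∧
    b ^ 2 + g ^ 2 + h ^ 2 = A₂ ^ 2 + A₃ ^ 2 ∧
    b ^ 2 * g ^ 2 + b ^ 2 * h ^ 2 + g ^ 2 * h ^ 2 = A₂ ^ 2 * A₃ ^ 2 ∧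
    ∃ c₂ c₃ d₂ d₃ : ℚ, b = c₂ * A₂ + c₃ * A₃ ∧ g + h = d₂ * A₂ + d₃ * A₃

theorem IsAdmissible.swapAl {k : ℂ} {p : HGParam} (hp : IsAdmissible A₀ A₂ A₃ k p) :
    IsAdmissible A₀ A₂ A₃ k (swapAl p) := by
  obtain ⟨b, g, h, rfl, h1, h2, h3, c₂, c₃, d₂, d₃, hb, hgh⟩ := hp
  exact ⟨b, h, g, swapAl_paramOf _ _ _ _ _, by linear_combination h1, by linear_combination h2,
    by linear_combination h3, c₂, c₃, d₂, d₃, hb, by linear_combination hgh⟩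

theorem IsAdmissible.swapBe {k : ℂ} {p : HGParam} (hp : IsAdmissible A₀ A₂ A₃ k p) :
    IsAdmissible A₀ A₂ A₃ k (swapBe p) := by
  obtain ⟨b, g, h, rfl, h1, h2, h3, c₂, c₃, d₂, d₃, hb, hgh⟩ := hp
  exact ⟨b, -h, -g, swapBe_paramOf _ _ _ _ _, by linear_combination h1, by linear_combination h2,
    by linear_combination h3, c₂, c₃, -d₂, -d₃, hb, by push_cast; linear_combination -hgh⟩

end Stmt14

/-- The invariants `H₀(n; A)` and `H⁽⁰⁾(n; α̂)` agree as functions of `n` (both are defined for all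
but finitely many `n`, and they are equal at every `n ≥ 1` where both are defined) iff `α̂` arises
from one of the two distinguished tuples by the symmetries `Aⱼ → −Aⱼ (j = 1, 2, 3)`, `A₂ ↔ A₃`,
`α₂ ↔ α₃`, `β₁ ↔ β₂`. -/
theorem stmt_14 (A₀ A₁ A₂ A₃ : ℂ)
    (hind : AlgebraicIndependent ℚ ![A₀, A₁, A₂, A₃])
    (p : HGParam) (hp0 : p.a0 = 0)
    (hbal : p.b1 + p.b2 + p.b3 - p.a1 - p.a2 - p.a3 = 1) :
    ((∀ᶠ n : ℕ in Filter.atTop, H0Def A₀ A₁ A₂ A₃ n ∧ HFDef p n) ∧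
      ∀ n : ℕ, 1 ≤ n → H0Def A₀ A₁ A₂ A₃ n → HFDef p n → H0 A₀ A₁ A₂ A₃ n = HF p n)
      ↔ ∃ s₁ s₂ s₃ : ℂ, (s₁ = 1 ∨ s₁ = -1) ∧ (s₂ = 1 ∨ s₂ = -1) ∧ (s₃ = 1 ∨ s₃ = -1) ∧
          ∃ σ τα τβ : Bool, ∃ q₀ : HGParam,
            (q₀ = T1 A₀ (s₁ * A₁) (s₂ * (if σ then A₃ else A₂)) (s₃ * (if σ then A₂ else A₃))
              ∨ q₀ = T2 A₀ (s₁ * A₁) (s₂ * (if σ then A₃ else A₂))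
                  (s₃ * (if σ then A₂ else A₃)))
            ∧ p = (if τα then swapAl else id) ((if τβ then swapBe else id) q₀) := by
  constructor
  · rintro ⟨hdef, heq⟩
    obtain ⟨A, b, g, h, k, rfl⟩ := exists_eq_paramOf p hp0 hbal
    obtain ⟨rfl, hid⟩ := identity_of_agree hind hdef heq
    obtain ⟨hk, hc⟩ := eq_or_of_identity hind fun m => by simpa using hid (m + A)
    obtain ⟨s₁, hs₁, rfl⟩ := exists_sign_of_sq_eq_sq hk
    rcases hc with ⟨rfl, h2, h3⟩ | ⟨rfl, h2, h3⟩ | ⟨rfl, h2, h3⟩ | ⟨rfl, h2, h3⟩ |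
      ⟨rfl, h2, h3⟩ | ⟨rfl, h2, h3⟩ <;>
    obtain ⟨s, hs, rfl⟩ := exists_neg_sign_of_sq_eq_sq h2 <;>
    obtain ⟨t, ht, rfl⟩ := exists_neg_sign_of_sq_eq_sq h3
    · exact ⟨s₁, t, s, hs₁, ht, hs, true, false, false, _, .inl rfl, by simp [T1_eq_paramOf]⟩
    · exact ⟨s₁, t, s, hs₁, ht, hs, false, false, false, _, .inl rfl, by simp [T1_eq_paramOf]⟩
    · exact ⟨s₁, s, t, hs₁, hs, ht, false, true, false, _, .inr rfl,
        by simp [T2_eq_paramOf, swapAl_paramOf]⟩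
    · exact ⟨s₁, s, t, hs₁, hs, ht, true, true, false, _, .inr rfl,
        by simp [T2_eq_paramOf, swapAl_paramOf]⟩
    · exact ⟨s₁, s, t, hs₁, hs, ht, false, false, false, _, .inr rfl, by simp [T2_eq_paramOf]⟩
    · exact ⟨s₁, s, t, hs₁, hs, ht, true, false, false, _, .inr rfl, by simp [T2_eq_paramOf]⟩
  · rintro ⟨s₁, s₂, s₃, hs₁, hs₂, hs₃, σ, τα, τβ, q₀, hq, hp⟩
    have rat : ∀ s : ℂ, (s = 1 ∨ s = -1) → s ^ 2 = 1 ∧ ∃ r : ℚ, s = r := by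
      rintro s (rfl | rfl)
      · exact ⟨by norm_num, 1, by norm_num⟩
      · exact ⟨by norm_num, -1, by norm_num⟩
    obtain ⟨e₁, r₁, rfl⟩ := rat s₁ hs₁
    obtain ⟨e₂, r₂, rfl⟩ := rat s₂ hs₂
    obtain ⟨e₃, r₃, rfl⟩ := rat s₃ hs₃
    have hq' : IsAdmissible A₀ A₂ A₃ (r₁ * A₁) q₀ := by
      rcases hq with rfl | rfl <;> cases σ
      · refine ⟨_, _, _, T1_eq_paramOf _ _ _ _, ?_, ?_, ?_, 0, 0, -r₂, -r₃, ?_, ?_⟩ <;> simp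
        · linear_combination A₃ ^ 2 * e₃ + A₂ ^ 2 * e₂
        · linear_combination r₂ ^ 2 * A₂ ^ 2 * A₃ ^ 2 * e₃ + A₂ ^ 2 * A₃ ^ 2 * e₂
        · ring
      · refine ⟨_, _, _, T1_eq_paramOf _ _ _ _, ?_, ?_, ?_, 0, 0, -r₃, -r₂, ?_, ?_⟩ <;> simp
        · linear_combination A₂ ^ 2 * e₃ + A₃ ^ 2 * e₂
        · linear_combination r₂ ^ 2 * A₂ ^ 2 * A₃ ^ 2 * e₃ + A₂ ^ 2 * A₃ ^ 2 * e₂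
      · refine ⟨_, _, _, T2_eq_paramOf _ _ _ _, ?_, ?_, ?_, -r₂, 0, 0, -r₃, ?_, ?_⟩ <;> simp
        · linear_combination A₃ ^ 2 * e₃ + A₂ ^ 2 * e₂
        · linear_combination r₂ ^ 2 * A₂ ^ 2 * A₃ ^ 2 * e₃ + A₂ ^ 2 * A₃ ^ 2 * e₂
      · refine ⟨_, _, _, T2_eq_paramOf _ _ _ _, ?_, ?_, ?_, 0, -r₂, -r₃, 0, ?_, ?_⟩ <;> simp
        · linear_combination A₂ ^ 2 * e₃ + A₃ ^ 2 * e₂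
        · linear_combination r₂ ^ 2 * A₂ ^ 2 * A₃ ^ 2 * e₃ + A₂ ^ 2 * A₃ ^ 2 * e₂
    have hp' : IsAdmissible A₀ A₂ A₃ (r₁ * A₁) p := by
      rw [hp]
      cases τα <;> cases τβ
      · exact hq'
      · exact hq'.swapBe
      · exact hq'.swapAl
      · exact hq'.swapBe.swapAl
    obtain ⟨b, g, h, rfl, h1, h2, h3, c₂, c₃, d₂, d₃, hb, hgh⟩ := hp'
    have hne : 1 - A₀ - b + g + h + r₁ * A₁ ≠ 0 := fun h0 =>
      linear_ne_zero hind r₁ (d₂ - c₂) (d₃ - c₃) (by push_cast; linear_combination h0 + hb - hgh)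
    refine ⟨(eventually_H0Def A₀ A₁ A₂ A₃).and (eventually_HFDef hne), fun n _ hd0 hd =>
      H0_eq_HF (by rw [mul_pow, e₁, one_mul]) h1 h2 h3 hd0 hd⟩
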